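/- For every integer n ≥ 0 the expected area of the random convex chain satisfies E[vol(T_n)] = 1/2 − 1/(6(n+1)) − H_{n+1}/(3(n+1)); equivalently E[V_n] = 1 − 1/(3(n+1)) − 2H_{n+1}/(3(n+1)). -/

import Mathlib

open MeasureTheory

noncomputable section

/-- The triangle with vertices (0,0), (1,0), (0,1). -/
def T : Set (ℝ × ℝ) := convexHull ℝ {(0, 0), (1, 0), (0, 1)}

/-- The uniform distribution on `T`: twice Lebesgue measure restricted to `T`. -/
def μT : Measure (ℝ × ℝ) := (2 : ENNReal) • (volume.restrict T)

/-- Joint law of `n` independent uniform points in `T`. -/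
def P (n : ℕ) : Measure (Fin n → ℝ × ℝ) := Measure.pi fun _ => μT

/-- The random convex chain: convex hull of the points together with `(1,0)` and `(0,1)`. -/
def Tchain (n : ℕ) (ω : Fin n → ℝ × ℝ) : Set (ℝ × ℝ) :=
  convexHull ℝ (Set.range ω ∪ {(1, 0), (0, 1)})

/-- Normalized area `V_n = 2 vol(T_n)`. -/
def V (n : ℕ) (ω : Fin n → ℝ × ℝ) : ℝ := 2 * (volume (Tchain n ω)).toReal

/-- Number of vertices of `T_n` other than the two corners. -/
def N (n : ℕ) (ω : Fin n → ℝ × ℝ) : ℕ :=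
  (Set.extremePoints ℝ (Tchain n ω)).ncard - 2

/-- Normalized moments `q_{n,k} = C(n+k,k) E[V_n^k]`. -/
def q (n k : ℕ) : ℝ := ((n + k).choose k : ℝ) * ∫ ω, (V n ω) ^ k ∂ P n

/-- Probability generating function of `N_n`. -/
def G (n : ℕ) (t : ℝ) : ℝ := ∫ ω, t ^ (N n ω) ∂ P n

/-- Harmonic number. -/
def H (j : ℕ) : ℝ := ∑ i ∈ Finset.range j, 1 / ((i : ℝ) + 1)

/-- Generalized harmonic number of order 2. -/
def H2 (j : ℕ) : ℝ := ∑ i ∈ Finset.range j, 1 / ((i : ℝ) + 1) ^ 2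

/-- `c(k,ℓ)`: elementary symmetric polynomial `e_k` of `2/(j(j+1))`, `j = 1,…,ℓ`. -/
def c (k l : ℕ) : ℝ :=
  ∑ S ∈ (Finset.Icc 1 l).powersetCard k, ∏ j ∈ S, 2 / ((j : ℝ) * ((j : ℝ) + 1))


lemma T_eq : T = {p : ℝ × ℝ | 0 ≤ p.1 ∧ 0 ≤ p.2 ∧ p.1 + p.2 ≤ 1} := by
  apply Set.Subset.antisymm
  · apply convexHull_min
    · rintro p hp
      simp only [Set.mem_insert_iff, Set.mem_singleton_iff] at hp
      rcases hp with rfl | rfl | rfl <;> simp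
    · rintro ⟨a, b⟩ ⟨h1, h2, h3⟩ ⟨c, d⟩ ⟨h4, h5, h6⟩ s t hs ht hst
      simp only [Set.mem_ofPred_eq, Prod.smul_mk, Prod.mk_add_mk, smul_eq_mul] at *
      refine ⟨by positivity, by positivity, ?_⟩
      nlinarith
  · rintro ⟨a, b⟩ ⟨h1, h2, h3⟩
    simp only at h1 h2 h3
    have hc : Convex ℝ T := convex_convexHull ℝ _
    have hsub := subset_convexHull ℝ ({(0, 0), (1, 0), (0, 1)} : Set (ℝ × ℝ))
    have m0 : ((0, 0) : ℝ × ℝ) ∈ T := hsub (by simp)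
    have m1 : ((1, 0) : ℝ × ℝ) ∈ T := hsub (by simp)
    have m2 : ((0, 1) : ℝ × ℝ) ∈ T := hsub (by simp)
    have := hc.sum_mem (t := Finset.univ) (w := ![1 - a - b, a, b])
      (z := ![(0, 0), (1, 0), (0, 1)])
      (by intro i _; fin_cases i <;> simp <;> linarith)
      (by simp [Fin.sum_univ_three]; ring)
      (by intro i _; fin_cases i <;> simp [m0, m1, m2])
    simpa [Fin.sum_univ_three] using this

lemma T_meas : MeasurableSet T := by
  rw [T_eq]
  refine (measurableSet_le measurable_const measurable_fst).inter
    ((measurableSet_le measurable_const measurable_snd).inter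
      (measurableSet_le (measurable_fst.add measurable_snd) measurable_const))

/-- Interior of the triangle. -/
def IT : Set (ℝ × ℝ) := {p | 0 < p.1 ∧ 0 < p.2 ∧ p.1 + p.2 < 1}

lemma IT_meas : MeasurableSet IT := by
  refine (measurableSet_lt measurable_const measurable_fst).inter
    ((measurableSet_lt measurable_const measurable_snd).inter
      (measurableSet_lt (measurable_fst.add measurable_snd) measurable_const))

lemma lint_Ioo (G f : ℝ → ℝ) (a b : ℝ) (hab : a ≤ b)
    (hG : ∀ x, HasDerivAt G (f x) x) (hf : Continuous f)
    (hpos : ∀ x ∈ Set.Ioo a b, 0 ≤ f x) :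
    ∫⁻ x in Set.Ioo a b, ENNReal.ofReal (f x) = ENNReal.ofReal (G b - G a) := by
  rw [← intervalIntegral.integral_eq_sub_of_hasDerivAt (fun x _ => hG x)
    (hf.intervalIntegrable a b), intervalIntegral.integral_of_le hab,
    integral_Ioc_eq_integral_Ioo, ofReal_integral_eq_lintegral_ofReal]
  · exact (hf.integrableOn_Icc).mono_set Set.Ioo_subset_Icc_self
  · exact (ae_restrict_iff' measurableSet_Ioo).2 (Filter.Eventually.of_forall hpos)

lemma lint_affine (F : ℝ → ENNReal) (k d : ℝ) (hk : 0 < k) :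
    ∫⁻ y, F ((y - d) / k) = ENNReal.ofReal k * ∫⁻ b, F b := by
  have h := lintegral_image_eq_lintegral_abs_deriv_mul (s := Set.univ) (f := fun b => k * b + d)
    (f' := fun _ => k) MeasurableSet.univ
    (fun x _ => by
      have := (((hasDerivAt_id x).const_mul k).add_const d).hasDerivWithinAt (s := Set.univ)
      rwa [mul_one] at this)
    (by intro x _ y _ h; simp only at h; have : k * x = k * y := by linarith
        exact mul_left_cancel₀ hk.ne' this)
    (fun y => F ((y - d) / k))
  have himg : (fun b => k * b + d) '' Set.univ = Set.univ := by
    apply Set.eq_univ_of_forall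
    intro y
    exact ⟨(y - d) / k, trivial, by field_simp; ring⟩
  rw [himg] at h
  simp only [Measure.restrict_univ] at h
  rw [h, abs_of_pos hk]
  have : ∀ x, F ((k * x + d - d) / k) = F x := fun x => by
    congr 1; field_simp; ring
  simp only [this]
  rw [lintegral_const_mul' _ _ ENNReal.ofReal_ne_top]

def g (x z : ℝ × ℝ) (b : ℝ) : ℝ := z.2 * x.1 - x.2 * z.1 - b * (x.1 - z.1)
def bet (x z : ℝ × ℝ) : ℝ := (z.2 * x.1 - x.2 * z.1) / (x.1 - z.1)
def D (x : ℝ × ℝ) (b : ℝ) (s : Prop) : Set (ℝ × ℝ) :=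
  {z | 0 < g x z b ∨ (s ∧ z.1 < x.1 ∧ g x z b = 0)}
def LL (x : ℝ × ℝ) : Set (ℝ × ℝ) :=
  {z | z.1 < x.1 ∧ x.2 < bet x z * (1 - x.1) ∧ bet x z < 1}

lemma D_convex (x : ℝ × ℝ) (b : ℝ) : Convex ℝ (D x b True) := by
  rintro z hz w hw s t hs ht hst
  have hg : g x (s • z + t • w) b = s * g x z b + t * g x w b := by
    have : t = 1 - s := by linarith
    subst this
    simp [g]; ring
  rcases hs.eq_or_lt with rfl | hs'
  · have : t = 1 := by linarith
    subst this; simpa using hw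
  rcases ht.eq_or_lt with rfl | ht'
  · have : s = 1 := by linarith
    subst this; simpa using hz
  simp only [D, Set.mem_ofPred_eq, true_and] at hz hw ⊢
  rw [hg]
  rcases hz with hz | ⟨hz1, hz2⟩ <;> rcases hw with hw | ⟨hw1, hw2⟩
  · left; positivity
  · left; rw [hw2]; simp; positivity
  · left; rw [hz2]; simp; positivity
  · right
    constructor
    · simp only [Prod.fst_add, Prod.smul_fst, smul_eq_mul]
      have : x.1 = s * x.1 + t * x.1 := by rw [← add_mul, hst, one_mul]
      rw [this]
      gcongr
    · rw [hz2, hw2]; simp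

lemma g_left {x z : ℝ × ℝ} (h : z.1 < x.1) (b : ℝ) : g x z b = (bet x z - b) * (x.1 - z.1) := by
  have : x.1 - z.1 ≠ 0 := by linarith
  unfold g bet; field_simp

lemma g_right {x z : ℝ × ℝ} (h : x.1 < z.1) (b : ℝ) : g x z b = (b - bet x z) * (z.1 - x.1) := by
  have : x.1 - z.1 ≠ 0 := by linarith
  unfold g bet; field_simp; ring

lemma vert {n : ℕ} (ω : Fin n → ℝ × ℝ) {x : ℝ × ℝ} (hx : x ∈ IT) {h : ℝ} (hh : h ≤ x.2)
    (hm : (x.1, h) ∈ Tchain n ω) : x ∈ Tchain n ω := by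
  obtain ⟨h1, h2, h3⟩ := hx
  have hc : Convex ℝ (Tchain n ω) := convex_convexHull ℝ _
  have hA : ((1, 0) : ℝ × ℝ) ∈ Tchain n ω := subset_convexHull ℝ _ (by simp)
  have hB : ((0, 1) : ℝ × ℝ) ∈ Tchain n ω := subset_convexHull ℝ _ (by simp)
  have hM : ((x.1, 1 - x.1) : ℝ × ℝ) ∈ Tchain n ω := by
    have := hc hA hB (a := x.1) (b := 1 - x.1) h1.le (by linarith) (by ring)
    simpa using this
  have hd : 0 < 1 - x.1 - h := by linarith
  have := hc hm hM (a := (1 - x.1 - x.2) / (1 - x.1 - h)) (b := (x.2 - h) / (1 - x.1 - h))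
    (div_nonneg (by linarith) hd.le) (div_nonneg (by linarith) hd.le) (by field_simp; ring)
  convert this using 1
  ext
  · simp; field_simp; ring
  · simp; field_simp; ring

lemma cross {n : ℕ} (ω : Fin n → ℝ × ℝ) {x z w : ℝ × ℝ} (hx : x ∈ IT)
    (hn : x ∉ Tchain n ω) (hz : z ∈ Tchain n ω) (hw : w ∈ Tchain n ω)
    (hzx : z.1 < x.1) (hwx : x.1 < w.1) : bet x w < bet x z := by
  by_contra hcon
  push Not at hcon
  apply hn
  have hc : Convex ℝ (Tchain n ω) := convex_convexHull ℝ _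
  have hd : 0 < w.1 - z.1 := by linarith
  have hm := hc hz hw (a := (w.1 - x.1) / (w.1 - z.1)) (b := (x.1 - z.1) / (w.1 - z.1))
    (div_nonneg (by linarith) hd.le) (div_nonneg (by linarith) hd.le) (by field_simp; ring)
  refine vert ω hx (h := (w.1 - x.1) / (w.1 - z.1) * z.2 + (x.1 - z.1) / (w.1 - z.1) * w.2) ?_ ?_
  · have e1 : 0 ≤ g x z (bet x z) := by rw [g_left hzx]; simp
    have e1' : g x z (bet x z) = 0 := by rw [g_left hzx]; simp
    have e2 : g x w (bet x z) ≤ 0 := by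
      rw [g_right hwx]
      exact mul_nonpos_of_nonpos_of_nonneg (by linarith) (by linarith)
    set b := bet x z
    have h1 := hx.1
    unfold g at e1' e2
    have key : x.1 * ((w.1 - x.1) * z.2 + (x.1 - z.1) * w.2 - x.2 * (w.1 - z.1)) ≤ 0 := by
      have : x.1 * ((w.1 - x.1) * z.2 + (x.1 - z.1) * w.2 - x.2 * (w.1 - z.1)) =
        (w.1 - x.1) * (z.2 * x.1 - x.2 * z.1 - b * (x.1 - z.1)) +
        (x.1 - z.1) * (w.2 * x.1 - x.2 * w.1 - b * (x.1 - w.1)) := by ring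
      rw [this, e1']
      have := mul_nonpos_of_nonneg_of_nonpos (by linarith : 0 ≤ x.1 - z.1) e2
      linarith
    have key2 := nonpos_of_mul_nonpos_right key h1
    have : (w.1 - x.1) / (w.1 - z.1) * z.2 + (x.1 - z.1) / (w.1 - z.1) * w.2 =
      ((w.1 - x.1) * z.2 + (x.1 - z.1) * w.2) / (w.1 - z.1) := by ring
    rw [this, div_le_iff₀ hd]
    linarith
  · convert hm using 1
    ext
    · simp; field_simp; ring
    · simp

def E0 (n : ℕ) (x : ℝ × ℝ) : Set (Fin n → ℝ × ℝ) := {ω | ∀ j, ω j ∈ D x 1 True}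
def Ei (n : ℕ) (x : ℝ × ℝ) (i : Fin n) : Set (Fin n → ℝ × ℝ) :=
  {ω | ω i ∈ LL x ∧ ∀ j, j ≠ i → ω j ∈ D x (bet x (ω i)) (i < j)}

lemma notin_iff {n : ℕ} (ω : Fin n → ℝ × ℝ) {x : ℝ × ℝ} (hx : x ∈ IT) :
    x ∉ Tchain n ω ↔ ω ∈ E0 n x ∨ ∃ i, ω ∈ Ei n x i := by
  have hx' := hx
  obtain ⟨h1, h2, h3⟩ := hx'
  have hA : ((1, 0) : ℝ × ℝ) ∈ Tchain n ω := subset_convexHull ℝ _ (by simp)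
  have hB : ((0, 1) : ℝ × ℝ) ∈ Tchain n ω := subset_convexHull ℝ _ (by simp)
  have hω : ∀ i, ω i ∈ Tchain n ω := fun i => subset_convexHull ℝ _ (by simp)
  have bA : bet x (1, 0) * (1 - x.1) = x.2 := by
    have : x.1 - 1 ≠ 0 := by linarith
    simp [bet]; field_simp; ring
  have bB : bet x (0, 1) = 1 := by simp [bet, h1.ne']
  have hxx : ∀ b, x ∉ D x b True := by
    intro b; simp [D, g]
  constructor
  · intro hn
    have hvert : ∀ j b, (ω j).1 = x.1 → 0 < g x (ω j) b := by
      intro j b hj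
      by_contra hc
      apply hn
      refine vert ω hx (h := (ω j).2) ?_ (by rw [← hj]; exact hω j)
      rw [g, hj] at hc
      nlinarith
    by_cases hL : ∃ i, (ω i).1 < x.1 ∧ bet x (ω i) < 1
    · right
      let S : Finset (Fin n) := Finset.univ.filter fun i => (ω i).1 < x.1 ∧ bet x (ω i) < 1
      have hS : S.Nonempty := by obtain ⟨i, hi⟩ := hL; exact ⟨i, by simp [S, hi]⟩
      obtain ⟨i, hi, hmin⟩ := S.exists_min_image (fun i => toLex (bet x (ω i), i)) hS
      simp only [S, Finset.mem_filter, Finset.mem_univ, true_and] at hi hmin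
      refine ⟨i, ⟨hi.1, ?_, hi.2⟩, ?_⟩
      · have := cross ω hx hn (hω i) hA hi.1 (by simp; linarith)
        nlinarith
      · intro j hj
        rcases lt_trichotomy (ω j).1 x.1 with h | h | h
        · simp only [D, Set.mem_ofPred_eq]
          rw [g_left h]
          have hp : 0 < x.1 - (ω j).1 := by linarith
          by_cases hj1 : bet x (ω j) < 1
          · have := hmin j ⟨h, hj1⟩
            rw [Prod.Lex.toLex_le_toLex] at this
            rcases this with h' | ⟨h', h''⟩
            · left; simp only at h'; exact mul_pos (by linarith) hp
            · right; simp only at h' h''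
              exact ⟨lt_of_le_of_ne h'' (Ne.symm hj), h, by rw [h']; simp⟩
          · left; exact mul_pos (by linarith [hi.2]) hp
        · left; exact hvert j _ h
        · left
          have := cross ω hx hn (hω i) (hω j) hi.1 h
          rw [g_right h]
          exact mul_pos (by linarith) (by linarith)
    · left
      push Not at hL
      intro j
      rcases lt_trichotomy (ω j).1 x.1 with h | h | h
      · simp only [D, Set.mem_ofPred_eq]
        have hp : 0 < x.1 - (ω j).1 := by linarith
        rw [g_left h]
        rcases (hL j h).eq_or_lt with h' | h'
        · right; exact ⟨trivial, h, by rw [← h']; simp⟩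
        · left; exact mul_pos (by linarith) hp
      · left; exact hvert j _ h
      · left
        have := cross ω hx hn hB (hω j) (by simpa using h1) h
        rw [g_right h]
        exact mul_pos (by linarith) (by linarith)
  · intro h
    have main : ∀ b, b ≤ 1 → x.2 < b * (1 - x.1) → (∀ j, ω j ∈ D x b True) →
        x ∉ Tchain n ω := by
      intro b hb hb' hall hmem
      apply hxx b
      refine convexHull_min ?_ (D_convex x b) hmem
      rintro z (⟨j, rfl⟩ | hz | hz)
      · exact hall j
      · rw [hz]; left; simp [g]; nlinarith
      · rw [Set.mem_singleton_iff] at hz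
        rw [hz]; simp only [D, Set.mem_ofPred_eq, g]
        rcases hb.eq_or_lt with rfl | hb
        · right; simpa using h1
        · left; simp; nlinarith
    rcases h with h | ⟨i, ⟨hi1, hi2, hi3⟩, hi⟩
    · exact main 1 le_rfl (by linarith) h
    · refine main (bet x (ω i)) hi3.le hi2 ?_
      intro j
      by_cases hj : j = i
      · subst hj; right; exact ⟨trivial, hi1, by rw [g_left hi1]; simp⟩
      · rcases hi j hj with h | ⟨_, h⟩
        · left; exact h
        · right; exact ⟨trivial, h⟩

lemma disj0 {n : ℕ} (x : ℝ × ℝ) (i : Fin n) : Disjoint (E0 n x) (Ei n x i) := by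
  rw [Set.disjoint_left]
  rintro ω h ⟨⟨h1, h2, h3⟩, h4⟩
  have := h i
  simp only [D, Set.mem_ofPred_eq] at this
  rw [g_left h1] at this
  have hp : 0 < x.1 - (ω i).1 := by linarith
  have : (bet x (ω i) - 1) * (x.1 - (ω i).1) < 0 := mul_neg_of_neg_of_pos (by linarith) hp
  rcases ‹_ ∨ _› with h | h <;> linarith

lemma disji {n : ℕ} (x : ℝ × ℝ) (i j : Fin n) (hij : i ≠ j) :
    Disjoint (Ei n x i) (Ei n x j) := by
  rw [Set.disjoint_left]
  rintro ω ⟨⟨h1, h2, h3⟩, h4⟩ ⟨⟨h5, h6, h7⟩, h8⟩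
  have a := h4 j hij.symm
  have b := h8 i hij
  simp only [D, Set.mem_ofPred_eq] at a b
  rw [g_left h5] at a
  rw [g_left h1] at b
  have hp : 0 < x.1 - (ω i).1 := by linarith
  have hq : 0 < x.1 - (ω j).1 := by linarith
  rcases a with a | a <;> rcases b with b | b
  · have := pos_of_mul_pos_left a hq.le
    have := pos_of_mul_pos_left b hp.le
    linarith
  · have := pos_of_mul_pos_left a hq.le
    have := (mul_eq_zero.1 b.2.2).resolve_right hp.ne'
    linarith
  · have := pos_of_mul_pos_left b hp.le
    have := (mul_eq_zero.1 a.2.2).resolve_right hq.ne'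
    linarith
  · exact absurd a.1 (not_lt.2 b.1.le)

lemma vol_slice (S : Set (ℝ × ℝ)) (hS : MeasurableSet S) (h : ℝ → ℝ) (a : ℝ)
    (h1 : ∀ z ∈ S, 0 ≤ z.1 ∧ 0 ≤ z.2 ∧ z.2 ≤ h z.1)
    (h2 : ∀ z : ℝ × ℝ, 0 < z.1 → 0 < z.2 → z.2 < h z.1 → z ∈ S)
    (h3 : ∀ z, a ≤ z → h z ≤ 0) :
    volume S = ∫⁻ z in Set.Ioo 0 a, ENNReal.ofReal (h z) := by
  rw [Measure.volume_eq_prod, Measure.prod_apply hS, ← lintegral_indicator measurableSet_Ioo]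
  apply lintegral_congr_ae
  have h0 : ∀ᵐ z : ℝ, z ≠ 0 := by
    simp [ae_iff]
  filter_upwards [h0] with z hz
  by_cases hzz : z ∈ Set.Ioo 0 a
  · rw [Set.indicator_of_mem hzz]
    apply le_antisymm
    · calc _ ≤ volume (Set.Icc 0 (h z)) := by
            apply measure_mono
            intro w hw
            exact ⟨(h1 _ hw).2.1, (h1 _ hw).2.2⟩
        _ = _ := by simp
    · calc _ = volume (Set.Ioo 0 (h z)) := by simp
        _ ≤ _ := by
            apply measure_mono
            intro w hw
            exact h2 _ hzz.1 hw.1 hw.2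
  · rw [Set.indicator_of_notMem hzz]
    rcases lt_or_gt_of_ne hz with hz | hz
    · have : Prod.mk z ⁻¹' S = ∅ := by
        ext w; simp only [Set.mem_preimage, Set.mem_empty_iff_false, iff_false]
        intro hw; have := (h1 _ hw).1; simp only at this; linarith
      simp [this]
    · have ha : a ≤ z := by by_contra hc; exact hzz ⟨hz, not_le.1 hc⟩
      apply le_antisymm _ (zero_le)
      calc _ ≤ volume (Set.Icc 0 (h z)) := by
            apply measure_mono
            intro w hw
            exact ⟨(h1 _ hw).2.1, (h1 _ hw).2.2⟩
        _ = 0 := by simp [h3 z ha]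

lemma vol_T' : ∫⁻ z in Set.Ioo (0:ℝ) 1, ENNReal.ofReal (1 - z) = ENNReal.ofReal (1 / 2) := by
  rw [lint_Ioo (fun z => z - z ^ 2 / 2) (fun z => 1 - z) 0 1 zero_le_one]
  · norm_num
  · intro x
    have := (hasDerivAt_id x).sub (((hasDerivAt_id x).pow 2).div_const 2)
    refine HasDerivAt.congr_deriv this ?_
    simp
  · fun_prop
  · intro x hx; linarith [hx.2]

lemma vol_T : volume T = ENNReal.ofReal (1 / 2) := by
  rw [vol_slice T T_meas (fun z => 1 - z) 1, vol_T']
  · rw [T_eq]; rintro z ⟨h1, h2, h3⟩; exact ⟨h1, h2, by linarith⟩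
  · rw [T_eq]; rintro z h1 h2 h3; exact ⟨h1.le, h2.le, by linarith⟩
  · intro z hz; linarith

lemma vol_IT : volume IT = ENNReal.ofReal (1 / 2) := by
  rw [vol_slice IT IT_meas (fun z => 1 - z) 1, vol_T']
  · rintro z ⟨h1, h2, h3⟩; exact ⟨h1.le, h2.le, by linarith⟩
  · rintro z h1 h2 h3; exact ⟨h1, h2, by linarith⟩
  · intro z hz; linarith

lemma IT_sub : IT ⊆ T := by
  rw [T_eq]; rintro z ⟨h1, h2, h3⟩; exact ⟨h1.le, h2.le, h3.le⟩

lemma IT_ae : IT =ᵐ[volume] T :=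
  ae_eq_of_subset_of_measure_ge IT_sub (by rw [vol_T, vol_IT]) IT_meas.nullMeasurableSet
    (by rw [vol_T]; exact ENNReal.ofReal_ne_top)

lemma μT_eq : μT = (2 : ENNReal) • (volume.restrict IT) := by
  rw [μT, Measure.restrict_congr_set IT_ae]

instance : IsProbabilityMeasure μT := ⟨by
  rw [μT]
  simp only [Measure.smul_apply, Measure.restrict_apply_univ, vol_T, smul_eq_mul]
  rw [← ENNReal.ofReal_ofNat, ← ENNReal.ofReal_mul (by norm_num)]
  norm_num⟩

instance (n : ℕ) : IsProbabilityMeasure (P n) := by unfold P; infer_instance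

lemma lint_μT (f : ℝ × ℝ → ENNReal) : ∫⁻ x, f x ∂μT = 2 * ∫⁻ x in IT, f x := by
  rw [μT_eq, lintegral_smul_measure, smul_eq_mul]

lemma g_meas' : Measurable fun p : (ℝ × ℝ) × (ℝ × ℝ) × ℝ => g p.1 p.2.1 p.2.2 := by
  unfold g; fun_prop
lemma bet_meas' : Measurable fun p : (ℝ × ℝ) × (ℝ × ℝ) => bet p.1 p.2 := by
  unfold bet; fun_prop

lemma mg {α : Type*} [MeasurableSpace α] {x z : α → ℝ × ℝ} {b : α → ℝ} (hx : Measurable x)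
    (hz : Measurable z) (hb : Measurable b) : Measurable fun t => g (x t) (z t) (b t) := by
  unfold g; fun_prop
lemma mbet {α : Type*} [MeasurableSpace α] {x z : α → ℝ × ℝ} (hx : Measurable x)
    (hz : Measurable z) : Measurable fun t => bet (x t) (z t) := by
  unfold bet; fun_prop

lemma mD {α : Type*} [MeasurableSpace α] {x z : α → ℝ × ℝ} {b : α → ℝ} (hx : Measurable x)
    (hz : Measurable z) (hb : Measurable b) (s : Prop) :
    MeasurableSet {t | z t ∈ D (x t) (b t) s} := by
  have h := mg hx hz hb
  exact (measurableSet_lt measurable_const h).union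
    ((MeasurableSet.const s).inter ((measurableSet_lt hz.fst hx.fst).inter
      (measurableSet_eq_fun h measurable_const)))

lemma mLL {α : Type*} [MeasurableSpace α] {x z : α → ℝ × ℝ} (hx : Measurable x)
    (hz : Measurable z) : MeasurableSet {t | z t ∈ LL (x t)} := by
  have h := mbet hx hz
  exact (measurableSet_lt hz.fst hx.fst).inter
    ((measurableSet_lt hx.snd (h.mul (measurable_const.sub hx.fst))).inter
      (measurableSet_lt h measurable_const))

lemma D_measure {x : ℝ × ℝ} (hx : x ∈ IT) {b : ℝ} (hb : b ≤ 1) (hb' : x.2 < b * (1 - x.1))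
    (s : Prop) : μT (D x b s) = ENNReal.ofReal (1 - b * (b * x.1 / (b - x.2))) := by
  obtain ⟨h1, h2, h3⟩ := hx
  have hD : MeasurableSet (D x b s) := mD measurable_const measurable_id measurable_const s
  have hb0 : 0 < b := by
    by_contra hc
    have := mul_nonpos_of_nonpos_of_nonneg (not_lt.1 hc) (by linarith : 0 ≤ 1 - x.1)
    linarith
  have hbx : 0 < b - x.2 := by nlinarith
  set a := b * x.1 / (b - x.2) with ha
  have ha0 : 0 < a := by positivity
  have ha1 : a ≤ 1 := by rw [ha, div_le_one hbx]; nlinarith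
  have hxa : b * x.1 = a * (b - x.2) := by rw [ha]; field_simp
  have key : volume ((D x b s)ᶜ ∩ T) = ENNReal.ofReal (b * a / 2) := by
    rw [vol_slice _ (hD.compl.inter T_meas) (fun z => b - b / a * z) a]
    · rw [lint_Ioo (fun z => b * z - b / a * (z ^ 2 / 2)) (fun z => b - b / a * z) 0 a ha0.le]
      · congr 1; field_simp; ring
      · intro z
        have := ((hasDerivAt_id z).const_mul b).sub
          ((((hasDerivAt_id z).pow 2).div_const 2).const_mul (b / a))
        refine HasDerivAt.congr_deriv this ?_
        simp
      · fun_prop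
      · intro z hz
        have : b / a * z = b * (z / a) := by ring
        rw [this]
        have : z / a ≤ 1 := (div_le_one ha0).2 hz.2.le
        nlinarith
    · rintro z ⟨hz, hzT⟩
      rw [T_eq] at hzT
      obtain ⟨k1, k2, k3⟩ := hzT
      refine ⟨k1, k2, ?_⟩
      have hg : g x z b ≤ 0 := by by_contra hc; exact hz (Or.inl (not_le.1 hc))
      have : b / a = (b - x.2) / x.1 := by field_simp; linarith
      simp only [this]
      unfold g at hg
      have : b - (b - x.2) / x.1 * z.1 = (b * x.1 - (b - x.2) * z.1) / x.1 := by field_simp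
      rw [this, le_div_iff₀ h1]
      linarith
    · intro z k1 k2 k3
      have : b / a = (b - x.2) / x.1 := by field_simp; linarith

      have k3' : b / a * z.1 < b := by linarith
      have hza : z.1 < a := by
        have : b / a * z.1 = b * (z.1 / a) := by ring
        rw [this] at k3'
        have : z.1 / a < 1 := by by_contra hc; nlinarith
        rwa [div_lt_one ha0] at this
      have hba : b ≤ b / a := by rw [le_div_iff₀ ha0]; nlinarith
      have hzb : b * z.1 ≤ b / a * z.1 := by gcongr
      refine ⟨?_, ?_⟩
      · have hg : g x z b < 0 := by
          rw [this] at k3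
          have e : b - (b - x.2) / x.1 * z.1 = (b * x.1 - (b - x.2) * z.1) / x.1 := by field_simp
          rw [e, lt_div_iff₀ h1] at k3
          unfold g; linarith
        intro hz
        rcases hz with hz | ⟨_, _, hz⟩ <;> linarith
      · rw [T_eq]; refine ⟨k1.le, k2.le, ?_⟩
        nlinarith
    · intro z hz
      have : b / a * z = b * (z / a) := by ring
      rw [this]
      have : 1 ≤ z / a := (one_le_div ha0).2 hz
      nlinarith
  have hc : μT (D x b s)ᶜ = ENNReal.ofReal (b * a) := by
    rw [μT, Measure.smul_apply, Measure.restrict_apply hD.compl, key, smul_eq_mul,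
      ← ENNReal.ofReal_ofNat, ← ENNReal.ofReal_mul (by norm_num)]
    congr 1; ring
  have := prob_compl_eq_one_sub (μ := μT) hD.compl
  rw [compl_compl, hc] at this
  rw [this, ENNReal.ofReal_sub _ (by positivity), ENNReal.ofReal_one]

lemma left_int {x : ℝ × ℝ} (hx : x ∈ IT) (F : ℝ → ENNReal) (hF : Measurable F) :
    ∫⁻ y in LL x, F (bet x y) ∂μT
      = ENNReal.ofReal x.1 * ∫⁻ b in Set.Ioo (x.2 / (1 - x.1)) 1, F b := by
  obtain ⟨h1, h2, h3⟩ := hx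
  have hLL : MeasurableSet (LL x) := mLL measurable_const measurable_id
  have hm : Measurable fun y => F (bet x y) := hF.comp (mbet measurable_const measurable_id)
  set Ft : ℝ → ENNReal := (Set.Ioo (x.2 / (1 - x.1)) 1).indicator F with hFt
  rw [← lintegral_indicator hLL, lint_μT, ← lintegral_indicator IT_meas,
    Measure.volume_eq_prod, lintegral_prod _
      ((hm.indicator hLL).indicator IT_meas).aemeasurable]
  have inner : ∀ y1 : ℝ, (∫⁻ y2, IT.indicator ((LL x).indicator fun y => F (bet x y)) (y1, y2))
      = (Set.Ioo 0 x.1).indicator (fun y1 => ENNReal.ofReal ((x.1 - y1) / x.1)) y1 *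
        ∫⁻ b, Ft b := by
    intro y1
    by_cases hy : y1 ∈ Set.Ioo 0 x.1
    · rw [Set.indicator_of_mem hy]
      obtain ⟨hy0, hy1⟩ := hy
      have hp : 0 < x.1 - y1 := by linarith
      rw [← lint_affine Ft ((x.1 - y1) / x.1) (x.2 * y1 / x.1) (by positivity)]
      apply lintegral_congr
      intro y2
      have hbet : (y2 - x.2 * y1 / x.1) / ((x.1 - y1) / x.1) = bet x (y1, y2) := by
        unfold bet; field_simp
      rw [hbet]
      by_cases hb : bet x (y1, y2) ∈ Set.Ioo (x.2 / (1 - x.1)) 1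
      · rw [hFt, Set.indicator_of_mem hb]
        obtain ⟨b1, b2⟩ := hb
        rw [div_lt_iff₀ (by linarith)] at b1
        have hb0 : 0 < bet x (y1, y2) := by
          by_contra hc
          have := mul_nonpos_of_nonpos_of_nonneg (not_lt.1 hc) (by linarith : 0 ≤ 1 - x.1)
          linarith
        have hy2 : y2 * x.1 = bet x (y1, y2) * (x.1 - y1) + x.2 * y1 := by
          unfold bet; field_simp; ring
        rw [Set.indicator_of_mem, Set.indicator_of_mem]
        · exact ⟨hy1, b1, b2⟩
        · have e1 : 0 < y2 * x.1 := by rw [hy2]; positivity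
          refine ⟨hy0, pos_of_mul_pos_left e1 h1.le, ?_⟩
          simp only
          have : (y1 + y2) * x.1 < 1 * x.1 := by
            rw [add_mul, hy2]
            have := mul_lt_mul_of_pos_right b2 hp
            have := mul_lt_mul_of_pos_right h3 hy0
            nlinarith
          exact lt_of_mul_lt_mul_right this h1.le
      · rw [hFt, Set.indicator_of_notMem hb]
        apply Set.indicator_apply_eq_zero.2
        intro _
        apply Set.indicator_apply_eq_zero.2
        rintro ⟨_, q1, q2⟩
        exact absurd ⟨by rw [div_lt_iff₀ (by linarith)]; exact q1, q2⟩ hb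
    · rw [Set.indicator_of_notMem hy, zero_mul]
      rw [lintegral_eq_zero_iff' (by
        exact (((hm.indicator hLL).indicator IT_meas).comp measurable_prodMk_left).aemeasurable)]
      refine Filter.Eventually.of_forall fun y2 => ?_
      apply Set.indicator_apply_eq_zero.2
      intro q
      apply Set.indicator_apply_eq_zero.2
      intro q'
      exact absurd ⟨q.1, q'.1⟩ hy
  simp_rw [inner]
  rw [lintegral_mul_const _ ((by fun_prop : Measurable fun y1 : ℝ =>
    ENNReal.ofReal ((x.1 - y1) / x.1)).indicator measurableSet_Ioo),
    lintegral_indicator measurableSet_Ioo, hFt, lintegral_indicator measurableSet_Ioo, ← mul_assoc]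
  congr 1
  rw [lint_Ioo (fun z => z - z ^ 2 / 2 / x.1) (fun z => (x.1 - z) / x.1) 0 x.1 h1.le]
  · rw [← ENNReal.ofReal_ofNat, ← ENNReal.ofReal_mul (by norm_num)]
    congr 1; field_simp; ring
  · intro z
    have := (hasDerivAt_id z).sub ((((hasDerivAt_id z).pow 2).div_const 2).div_const x.1)
    refine HasDerivAt.congr_deriv this ?_
    simp; field_simp
  · fun_prop
  · intro z hz; exact div_nonneg (by linarith [hz.2]) h1.le

def Cf (x : ℝ × ℝ) (b : ℝ) : ℝ := 1 - b * (b * x.1 / (b - x.2))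

lemma mCf {α : Type*} [MeasurableSpace α] {x : α → ℝ × ℝ} {b : α → ℝ} (hx : Measurable x)
    (hb : Measurable b) : Measurable fun t => Cf (x t) (b t) := by
  unfold Cf; fun_prop

lemma P_E0 {n : ℕ} {x : ℝ × ℝ} (hx : x ∈ IT) :
    P n (E0 n x) = ENNReal.ofReal (1 - x.1 / (1 - x.2)) ^ n := by
  have : E0 n x = Set.pi Set.univ (fun _ => D x 1 True) := by
    ext ω; simp [E0]
  rw [this, P, Measure.pi_pi]
  have h := D_measure hx le_rfl (by linarith [hx.2.2] : x.2 < 1 * (1 - x.1)) True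
  simp [h]

lemma P_Ei {m : ℕ} {x : ℝ × ℝ} (hx : x ∈ IT) (i : Fin (m + 1)) :
    P (m + 1) (Ei (m + 1) x i) =
      ∫⁻ y in LL x, ENNReal.ofReal (Cf x (bet x y)) ^ m ∂μT := by
  set S : Set ((ℝ × ℝ) × (Fin m → ℝ × ℝ)) :=
    {p | p.1 ∈ LL x ∧ ∀ j, p.2 j ∈ D x (bet x p.1) (i < i.succAbove j)} with hS
  have hSm : MeasurableSet S := by
    refine (mLL measurable_const measurable_fst).inter ?_
    have : {p : (ℝ × ℝ) × (Fin m → ℝ × ℝ) | ∀ j, p.2 j ∈ D x (bet x p.1) (i < i.succAbove j)}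
      = ⋂ j, {p | p.2 j ∈ D x (bet x p.1) (i < i.succAbove j)} := by ext; simp
    change MeasurableSet {p : (ℝ × ℝ) × (Fin m → ℝ × ℝ) |
      ∀ j, p.2 j ∈ D x (bet x p.1) (i < i.succAbove j)}
    rw [this]
    refine MeasurableSet.iInter fun j => mD measurable_const (by fun_prop)
      (mbet measurable_const measurable_fst) _
  have hpre : Ei (m + 1) x i =
      (MeasurableEquiv.piFinSuccAbove (fun _ : Fin (m + 1) => ℝ × ℝ) i) ⁻¹' S := by
    ext ω
    simp only [Ei, hS, Set.mem_preimage, Set.mem_ofPred_eq]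
    refine and_congr Iff.rfl ?_
    constructor
    · intro h j
      exact h (i.succAbove j) (Fin.succAbove_ne i j)
    · intro h j hj
      obtain ⟨k, rfl⟩ := Fin.exists_succAbove_eq hj
      exact h k
  have hmp := measurePreserving_piFinSuccAbove (fun _ : Fin (m + 1) => μT) i
  rw [hpre, P, hmp.measure_preimage hSm.nullMeasurableSet, Measure.prod_apply hSm,
    ← lintegral_indicator (show MeasurableSet (LL x) from mLL measurable_const measurable_id)]
  apply lintegral_congr
  intro y
  by_cases hy : y ∈ LL x
  · rw [Set.indicator_of_mem hy]
    have : Prod.mk y ⁻¹' S = Set.pi Set.univ (fun j => D x (bet x y) (i < i.succAbove j)) := by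
      ext ω; simp [hS, hy]
    rw [this, Measure.pi_pi]
    simp_rw [D_measure hx hy.2.2.le hy.2.1]
    simp [Cf]
  · rw [Set.indicator_of_notMem hy]
    have : Prod.mk y ⁻¹' S = ∅ := by
      ext ω; simp [hS, hy]
    simp [this]

lemma first_int (n : ℕ) :
    ∫⁻ x, ENNReal.ofReal (1 - x.1 / (1 - x.2)) ^ n ∂μT = ENNReal.ofReal (1 / ((n : ℝ) + 1)) := by
  have hm : Measurable fun x : ℝ × ℝ => ENNReal.ofReal (1 - x.1 / (1 - x.2)) ^ n := by fun_prop
  rw [lint_μT, ← lintegral_indicator IT_meas, Measure.volume_eq_prod,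
    lintegral_prod_symm _ (hm.indicator IT_meas).aemeasurable]
  have inner : ∀ x2 : ℝ, (∫⁻ x1, IT.indicator
      (fun x : ℝ × ℝ => ENNReal.ofReal (1 - x.1 / (1 - x.2)) ^ n) (x1, x2)) =
      (Set.Ioo (0:ℝ) 1).indicator (fun x2 => ENNReal.ofReal ((1 - x2) / ((n : ℝ) + 1))) x2 := by
    intro x2
    by_cases h : x2 ∈ Set.Ioo (0:ℝ) 1
    · rw [Set.indicator_of_mem h]
      have hp : 0 < 1 - x2 := by linarith [h.2]
      have e : ∀ x1 : ℝ, IT.indicator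
          (fun x : ℝ × ℝ => ENNReal.ofReal (1 - x.1 / (1 - x.2)) ^ n) (x1, x2) =
          (Set.Ioo 0 (1 - x2)).indicator
            (fun x1 => ENNReal.ofReal ((1 - x1 / (1 - x2)) ^ n)) x1 := by
        intro x1
        by_cases h1 : x1 ∈ Set.Ioo 0 (1 - x2)
        · rw [Set.indicator_of_mem h1, Set.indicator_of_mem, ENNReal.ofReal_pow]
          · rw [sub_nonneg, div_le_one hp]; exact h1.2.le
          · exact ⟨h1.1, h.1, by simp only; linarith [h1.2]⟩
        · rw [Set.indicator_of_notMem h1]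
          apply Set.indicator_of_notMem
          rintro ⟨q1, q2, q3⟩
          exact h1 ⟨q1, by simp only at q3; linarith⟩
      simp_rw [e]
      rw [lintegral_indicator measurableSet_Ioo,
        lint_Ioo (fun z => -((1 - x2) / ((n : ℝ) + 1)) * (1 - z / (1 - x2)) ^ (n + 1))
          (fun z => (1 - z / (1 - x2)) ^ n) 0 (1 - x2) hp.le]
      · congr 1
        rw [div_self hp.ne']; simp
      · intro z
        have := ((((hasDerivAt_id z).div_const (1 - x2)).const_sub 1).pow (n + 1)).const_mul
          (-((1 - x2) / ((n : ℝ) + 1)))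
        refine HasDerivAt.congr_deriv this ?_
        simp; field_simp
      · fun_prop
      · intro z hz
        apply pow_nonneg
        rw [sub_nonneg, div_le_one hp]; exact hz.2.le
    · rw [Set.indicator_of_notMem h]
      have : ∀ x1 : ℝ, IT.indicator
          (fun x : ℝ × ℝ => ENNReal.ofReal (1 - x.1 / (1 - x.2)) ^ n) (x1, x2) = 0 := by
        intro x1
        apply Set.indicator_of_notMem
        rintro ⟨q1, q2, q3⟩
        exact h ⟨q2, by simp only at q1 q3; linarith⟩
      simp [this]
  simp_rw [inner]
  rw [lintegral_indicator measurableSet_Ioo,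
    lint_Ioo (fun z => (z - z ^ 2 / 2) / ((n : ℝ) + 1)) (fun z => (1 - z) / ((n : ℝ) + 1)) 0 1
      zero_le_one]
  · rw [← ENNReal.ofReal_ofNat, ← ENNReal.ofReal_mul (by norm_num)]
    congr 1; field_simp; ring
  · intro x
    have := ((hasDerivAt_id x).sub (((hasDerivAt_id x).pow 2).div_const 2)).div_const ((n : ℝ) + 1)
    refine HasDerivAt.congr_deriv this ?_
    simp
  · fun_prop
  · intro x hx
    exact div_nonneg (by linarith [hx.2]) (by positivity)

def psi (m : ℕ) (b : ℝ) : ℝ :=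
  (-(1 - b) ^ (m + 1) + (∑ k ∈ Finset.range (m + 2), (1 - b) ^ k) / ((m : ℝ) + 2)) / ((m : ℝ) + 1)

lemma J_int (m : ℕ) {b : ℝ} (hb : b ∈ Set.Ioo (0:ℝ) 1) :
    ENNReal.ofReal b * ∫⁻ a in Set.Ioo (0:ℝ) 1, ENNReal.ofReal (a * (1 - a * b) ^ m)
      = ENNReal.ofReal (psi m b) := by
  obtain ⟨hb0, hb1⟩ := hb
  rw [lint_Ioo (fun a => (-(a * (1 - a * b) ^ (m + 1)) -
    (1 - a * b) ^ (m + 2) / (((m : ℝ) + 2) * b)) / (((m : ℝ) + 1) * b))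
    (fun a => a * (1 - a * b) ^ m) 0 1 zero_le_one]
  · rw [← ENNReal.ofReal_mul hb0.le]
    congr 1
    have hgeo : (∑ k ∈ Finset.range (m + 2), (1 - b) ^ k) = (1 - (1 - b) ^ (m + 2)) / b := by
      rw [geom_sum_eq (by linarith)]
      have : 1 - b - 1 = -b := by ring
      rw [this]; field_simp; ring
    unfold psi
    rw [hgeo]
    simp only [one_mul, zero_mul, sub_zero, one_pow]
    field_simp
    ring
  · intro a
    have d1 := ((hasDerivAt_id a).mul_const b).const_sub 1
    have := (((hasDerivAt_id a).mul (d1.pow (m + 1))).neg.sub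
      ((d1.pow (m + 2)).div_const (((m : ℝ) + 2) * b))).div_const (((m : ℝ) + 1) * b)
    refine HasDerivAt.congr_deriv this ?_
    simp
    field_simp
    ring
  · fun_prop
  · intro a ha
    have : 0 ≤ 1 - a * b := by nlinarith [ha.1, ha.2]
    have := ha.1
    positivity

lemma psi_int (m : ℕ) :
    ∫⁻ b in Set.Ioo (0:ℝ) 1, ENNReal.ofReal (psi m b) =
      ENNReal.ofReal ((H (m + 2) - 1) / (((m : ℝ) + 1) * ((m : ℝ) + 2))) := by
  rw [lint_Ioo (fun b => ((1 - b) ^ (m + 2) / ((m : ℝ) + 2) -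
    (∑ k ∈ Finset.range (m + 2), (1 - b) ^ (k + 1) / ((k : ℝ) + 1)) / ((m : ℝ) + 2)) /
      ((m : ℝ) + 1)) (psi m) 0 1 zero_le_one]
  · congr 1
    simp [H]
    field_simp
    ring
  · intro b
    have d1 := (hasDerivAt_id b).const_sub 1
    have ds : HasDerivAt (fun b : ℝ => ∑ k ∈ Finset.range (m + 2), (1 - b) ^ (k + 1) / ((k : ℝ) + 1))
        (∑ k ∈ Finset.range (m + 2), -(1 - b) ^ k) b := by
      apply HasDerivAt.fun_sum
      intro k _
      refine HasDerivAt.congr_deriv ((d1.pow (k + 1)).div_const ((k : ℝ) + 1)) ?_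
      simp
      field_simp
    have := (((d1.pow (m + 2)).div_const ((m : ℝ) + 2)).sub
      (ds.div_const ((m : ℝ) + 2))).div_const ((m : ℝ) + 1)
    refine HasDerivAt.congr_deriv this ?_
    simp [psi]
    field_simp
    ring
  · unfold psi; fun_prop
  · intro b hb
    unfold psi
    apply div_nonneg _ (by positivity)
    rw [neg_add_eq_sub, sub_nonneg, le_div_iff₀ (by positivity)]
    have : ∑ k ∈ Finset.range (m + 2), (1 - b) ^ (m + 1) ≤
        ∑ k ∈ Finset.range (m + 2), (1 - b) ^ k := by
      apply Finset.sum_le_sum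
      intro k hk
      apply pow_le_pow_of_le_one (by linarith [hb.2]) (by linarith [hb.1])
      have := Finset.mem_range.1 hk
      omega
    simp at this
    linarith

def ESet : Set ((ℝ × ℝ) × ℝ) := {p | p.1 ∈ IT ∧ p.1.2 < p.2 * (1 - p.1.1) ∧ p.2 < 1}
def Psi (m : ℕ) : (ℝ × ℝ) × ℝ → ENNReal :=
  ESet.indicator fun p => ENNReal.ofReal p.1.1 * ENNReal.ofReal (Cf p.1 p.2) ^ m

lemma ESet_meas : MeasurableSet ESet :=
  (measurable_fst IT_meas).inter ((measurableSet_lt measurable_fst.snd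
    (measurable_snd.mul (measurable_const.sub measurable_fst.fst))).inter
    (measurableSet_lt measurable_snd measurable_const))

lemma Psi_meas (m : ℕ) : Measurable (Psi m) := by
  refine Measurable.indicator ?_ ESet_meas
  have := mCf (α := (ℝ × ℝ) × ℝ) measurable_fst measurable_snd
  fun_prop

lemma Psi_inner (m : ℕ) (b x2 : ℝ) :
    ∫⁻ x1, Psi m ((x1, x2), b) =
      (Set.Ioo (0:ℝ) 1).indicator (fun b => (Set.Ioo 0 b).indicator
        (fun x2 => ENNReal.ofReal (((b - x2) / b) ^ 2) *
          ∫⁻ a in Set.Ioo (0:ℝ) 1, ENNReal.ofReal (a * (1 - a * b) ^ m)) x2) b := by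
  by_cases hb : b ∈ Set.Ioo (0:ℝ) 1
  · rw [Set.indicator_of_mem hb]
    obtain ⟨hb0, hb1⟩ := hb
    by_cases hx : x2 ∈ Set.Ioo 0 b
    · rw [Set.indicator_of_mem hx]
      obtain ⟨hx0, hx1⟩ := hx
      have hk : 0 < (b - x2) / b := div_pos (by linarith) hb0
      have hbx : 0 < b - x2 := by linarith
      set k := (b - x2) / b with hkdef
      have e : ∀ x1, Psi m ((x1, x2), b) = (fun a => (Set.Ioo (0:ℝ) 1).indicator (fun a =>
          ENNReal.ofReal k * ENNReal.ofReal (a * (1 - a * b) ^ m)) a) ((x1 - 0) / k) := by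
        intro x1
        simp only [sub_zero]
        by_cases ha : x1 / k ∈ Set.Ioo (0:ℝ) 1
        · rw [Set.indicator_of_mem ha]
          obtain ⟨ha0, ha1⟩ := ha
          have hx1p : 0 < x1 := by rwa [div_pos_iff_of_pos_right hk] at ha0
          have hx1k : x1 < k := by rwa [div_lt_one hk] at ha1
          have hx1b : x1 * b < b - x2 := by rwa [hkdef, lt_div_iff₀ hb0] at hx1k
          have hmem : ((x1, x2), b) ∈ ESet := by
            refine ⟨⟨hx1p, hx0, ?_⟩, ?_, hb1⟩
            · simp only
              have : x1 < 1 := by nlinarith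
              nlinarith
            · simp only; linarith
          rw [Psi, Set.indicator_of_mem hmem]
          have hC : Cf (x1, x2) b = 1 - x1 / k * b := by
            simp only [Cf, hkdef]; field_simp
          simp only [hC]
          have hnn : 0 ≤ 1 - x1 / k * b := by nlinarith
          rw [← ENNReal.ofReal_pow hnn, ← ENNReal.ofReal_mul hx1p.le, ← ENNReal.ofReal_mul hk.le]
          congr 1
          field_simp
        · rw [Set.indicator_of_notMem ha]
          apply Set.indicator_of_notMem
          rintro ⟨⟨q1, q2, q3⟩, q4, q5⟩
          simp only at q1 q2 q3 q4 q5
          refine ha ⟨by positivity, ?_⟩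
          rw [div_lt_one hk, hkdef, lt_div_iff₀ hb0]
          linarith
      simp_rw [e]
      rw [lint_affine (fun a => (Set.Ioo (0:ℝ) 1).indicator (fun a =>
          ENNReal.ofReal k * ENNReal.ofReal (a * (1 - a * b) ^ m)) a) k 0 hk,
        lintegral_indicator measurableSet_Ioo, lintegral_const_mul' _ _ ENNReal.ofReal_ne_top,
        ← mul_assoc, ← ENNReal.ofReal_mul hk.le, sq]
    · rw [Set.indicator_of_notMem hx]
      have : ∀ x1, Psi m ((x1, x2), b) = 0 := by
        intro x1
        apply Set.indicator_of_notMem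
        rintro ⟨⟨q1, q2, q3⟩, q4, q5⟩
        simp only at q1 q2 q3 q4 q5
        exact hx ⟨q2, by nlinarith⟩
      simp [this]
  · rw [Set.indicator_of_notMem hb]
    have : ∀ x1, Psi m ((x1, x2), b) = 0 := by
      intro x1
      apply Set.indicator_of_notMem
      rintro ⟨⟨q1, q2, q3⟩, q4, q5⟩
      simp only at q1 q2 q3 q4 q5
      refine hb ⟨?_, q5⟩
      by_contra hc
      have := mul_nonpos_of_nonpos_of_nonneg (not_lt.1 hc) (by linarith : 0 ≤ 1 - x1)
      linarith
    simp [this]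

lemma second_int (m : ℕ) :
    ∫⁻ x, (ENNReal.ofReal x.1 * ∫⁻ b in Set.Ioo (x.2 / (1 - x.1)) 1,
      ENNReal.ofReal (Cf x b) ^ m) ∂μT
      = ENNReal.ofReal (2 / 3 * ((H (m + 2) - 1) / (((m : ℝ) + 1) * ((m : ℝ) + 2)))) := by
  have h1 : ∀ x : ℝ × ℝ, IT.indicator (fun x => ENNReal.ofReal x.1 *
      ∫⁻ b in Set.Ioo (x.2 / (1 - x.1)) 1, ENNReal.ofReal (Cf x b) ^ m) x
      = ∫⁻ b, Psi m (x, b) := by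
    intro x
    by_cases hx : x ∈ IT
    · rw [Set.indicator_of_mem hx, ← lintegral_const_mul' _ _ ENNReal.ofReal_ne_top,
        ← lintegral_indicator measurableSet_Ioo]
      apply lintegral_congr
      intro b
      have hd : 0 < 1 - x.1 := by linarith [hx.2.1, hx.2.2]
      by_cases hb : b ∈ Set.Ioo (x.2 / (1 - x.1)) 1
      · rw [Set.indicator_of_mem hb, Psi, Set.indicator_of_mem]
        exact ⟨hx, (div_lt_iff₀ hd).1 hb.1, hb.2⟩
      · rw [Set.indicator_of_notMem hb, Psi, Set.indicator_of_notMem]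
        rintro ⟨_, q1, q2⟩
        exact hb ⟨(div_lt_iff₀ hd).2 q1, q2⟩
    · rw [Set.indicator_of_notMem hx]
      have : ∀ b, Psi m (x, b) = 0 := fun b => Set.indicator_of_notMem (fun q => hx q.1) _
      simp [this]
  rw [lint_μT, ← lintegral_indicator IT_meas]
  simp_rw [h1]
  rw [lintegral_lintegral_swap (f := fun x b => Psi m (x, b)) (Psi_meas m).aemeasurable]
  have h2 : ∀ b : ℝ, ∫⁻ x : ℝ × ℝ, Psi m (x, b) = (Set.Ioo (0:ℝ) 1).indicator
      (fun b => ENNReal.ofReal (1 / 3) * ENNReal.ofReal (psi m b)) b := by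
    intro b
    rw [Measure.volume_eq_prod, lintegral_prod_symm (fun x => Psi m (x, b))
      ((Psi_meas m).comp measurable_prodMk_right).aemeasurable]
    simp_rw [Psi_inner]
    by_cases hb : b ∈ Set.Ioo (0:ℝ) 1
    · simp only [Set.indicator_of_mem hb]
      have hb0 := hb.1
      rw [lintegral_indicator measurableSet_Ioo, lintegral_mul_const _ (by fun_prop),
        lint_Ioo (fun z => -(b / 3) * ((b - z) / b) ^ 3) (fun z => ((b - z) / b) ^ 2) 0 b hb0.le,
        ← J_int m hb, ← mul_assoc, ← ENNReal.ofReal_mul (by norm_num)]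
      · congr 2; field_simp; ring
      · intro z
        have := ((((hasDerivAt_id z).const_sub b).div_const b).pow 3).const_mul (-(b / 3))
        refine HasDerivAt.congr_deriv this ?_
        simp; field_simp
      · fun_prop
      · intro z _; positivity
    · simp only [Set.indicator_of_notMem hb]; simp
  simp_rw [h2]
  rw [lintegral_indicator measurableSet_Ioo, lintegral_const_mul' _ _ ENNReal.ofReal_ne_top,
    psi_int, ← mul_assoc, ← ENNReal.ofReal_ofNat, ← ENNReal.ofReal_mul (by norm_num),
    ← ENNReal.ofReal_mul (by norm_num)]
  congr 1; ring

def EE (n : ℕ) : Set ((Fin n → ℝ × ℝ) × (ℝ × ℝ)) :=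
  {p | p.1 ∈ E0 n p.2 ∨ ∃ i, p.1 ∈ Ei n p.2 i}

lemma Ei_meas' (n : ℕ) (i : Fin n) :
    MeasurableSet {p : (Fin n → ℝ × ℝ) × (ℝ × ℝ) | p.1 ∈ Ei n p.2 i} := by
  refine (mLL measurable_snd (by fun_prop)).inter ?_
  have : {p : (Fin n → ℝ × ℝ) × (ℝ × ℝ) |
      ∀ j, j ≠ i → p.1 j ∈ D p.2 (bet p.2 (p.1 i)) (i < j)}
    = ⋂ j, {p | j ≠ i → p.1 j ∈ D p.2 (bet p.2 (p.1 i)) (i < j)} := by ext; simp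
  change MeasurableSet {p : (Fin n → ℝ × ℝ) × (ℝ × ℝ) |
      ∀ j, j ≠ i → p.1 j ∈ D p.2 (bet p.2 (p.1 i)) (i < j)}
  rw [this]
  refine MeasurableSet.iInter fun j => ?_
  by_cases hj : j = i
  · simp [hj]
  · simp only [ne_eq, hj, not_false_eq_true, true_imp_iff]
    exact mD measurable_snd (by fun_prop) (mbet measurable_snd (by fun_prop)) _

lemma EE_meas (n : ℕ) : MeasurableSet (EE n) := by
  have : EE n = (⋂ j, {p : (Fin n → ℝ × ℝ) × (ℝ × ℝ) | p.1 j ∈ D p.2 1 True}) ∪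
      ⋃ i, {p : (Fin n → ℝ × ℝ) × (ℝ × ℝ) | p.1 ∈ Ei n p.2 i} := by
    ext p; simp [EE, E0]
  rw [this]
  refine MeasurableSet.union (MeasurableSet.iInter fun j => ?_)
    (MeasurableSet.iUnion fun i => Ei_meas' n i)
  exact mD measurable_snd (by fun_prop) measurable_const _

lemma EE_slice {n : ℕ} {x : ℝ × ℝ} (hx : x ∈ IT) :
    P n ((fun ω => (ω, x)) ⁻¹' EE n) = ENNReal.ofReal (1 - x.1 / (1 - x.2)) ^ n +
      n * (ENNReal.ofReal x.1 * ∫⁻ b in Set.Ioo (x.2 / (1 - x.1)) 1,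
        ENNReal.ofReal (Cf x b) ^ (n - 1)) := by
  have : ((fun ω => (ω, x)) ⁻¹' EE n) = E0 n x ∪ ⋃ i, Ei n x i := by
    ext ω; simp [EE]
  have hmi : ∀ i, MeasurableSet (Ei n x i) := fun i =>
    (measurable_prodMk_right (y := x)) (Ei_meas' n i)
  rw [this, measure_union (Set.disjoint_iUnion_right.2 fun i => disj0 x i)
    (MeasurableSet.iUnion hmi), P_E0 hx, measure_iUnion (fun i j h => disji x i j h) hmi,
    tsum_fintype]
  congr 1
  rcases n with _ | m
  · simp
  · simp_rw [P_Ei hx]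
    rw [left_int hx (fun b => ENNReal.ofReal (Cf x b) ^ m)
      (by have := mCf (x := fun _ : ℝ => x) measurable_const measurable_id; fun_prop)]
    simp

lemma H_ge (m : ℕ) : 1 ≤ H (m + 1) := by
  unfold H
  rw [Finset.sum_range_succ']
  have : 0 ≤ ∑ k ∈ Finset.range m, 1 / (((k + 1 : ℕ) : ℝ) + 1) :=
    Finset.sum_nonneg fun _ _ => by positivity
  simp at this ⊢
  linarith

lemma total (n : ℕ) : ∫⁻ x, P n ((fun ω => (ω, x)) ⁻¹' EE n) ∂μT =
    ENNReal.ofReal (1 / (3 * ((n : ℝ) + 1)) + 2 * H (n + 1) / (3 * ((n : ℝ) + 1))) := by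
  have hae : ∀ᵐ x ∂μT, x ∈ IT := by
    rw [μT_eq]
    exact Measure.ae_smul_measure (ae_restrict_mem IT_meas) 2
  rw [lintegral_congr_ae (hae.mono fun x hx => EE_slice (n := n) hx),
    lintegral_add_left (by fun_prop), first_int, lintegral_const_mul' _ _ (by simp), ]
  have hH := H_ge n
  rcases n with _ | m
  · simp [H]; norm_num
  · simp only [Nat.add_sub_cancel]
    rw [second_int, ← ENNReal.ofReal_natCast, ← ENNReal.ofReal_mul (by positivity),
      ← ENNReal.ofReal_add (by positivity)]
    · congr 1
      push_cast
      field_simp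
      ring
    · have : 0 ≤ H (m + 2) - 1 := by linarith
      positivity

lemma main_ae (n : ℕ) (ω : Fin n → ℝ × ℝ) :
    μT (Tchain n ω)ᶜ = μT (Prod.mk ω ⁻¹' EE n) := by
  apply measure_congr
  have hae : ∀ᵐ x ∂μT, x ∈ IT := by
    rw [μT_eq]
    exact Measure.ae_smul_measure (ae_restrict_mem IT_meas) 2
  filter_upwards [hae] with x hx
  exact propext (notin_iff ω hx)

lemma chain_meas (n : ℕ) (ω : Fin n → ℝ × ℝ) : MeasurableSet (Tchain n ω) := by
  have : ((Set.range ω ∪ {(1, 0), (0, 1)}) : Set (ℝ × ℝ)).Finite :=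
    (Set.finite_range ω).union (by simp)
  exact (this.isCompact_convexHull ℝ).measurableSet

lemma P_ae (n : ℕ) : ∀ᵐ ω ∂P n, ∀ i, ω i ∈ T := by
  rw [ae_all_iff]
  intro i
  have hT : ∀ᵐ z ∂μT, z ∈ T := by
    rw [μT]; exact Measure.ae_smul_measure (ae_restrict_mem T_meas) 2
  exact (measurePreserving_eval (fun _ : Fin n => μT) i).quasiMeasurePreserving.ae hT

lemma vol_chain {n : ℕ} {ω : Fin n → ℝ × ℝ} (h : ∀ i, ω i ∈ T) :
    2 * (volume (Tchain n ω)).toReal = 1 - (μT (Prod.mk ω ⁻¹' EE n)).toReal := by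
  have hsub : Tchain n ω ⊆ T := by
    refine convexHull_min ?_ (convex_convexHull ℝ _)
    rintro z (⟨i, rfl⟩ | hz | hz)
    · exact h i
    · rw [hz]; exact subset_convexHull ℝ _ (by simp)
    · rw [Set.mem_singleton_iff] at hz; rw [hz]; exact subset_convexHull ℝ _ (by simp)
  have h2 : (μT (Tchain n ω)).toReal = 2 * (volume (Tchain n ω)).toReal := by
    rw [μT, Measure.smul_apply, Measure.restrict_apply (chain_meas n ω),
      Set.inter_eq_left.2 hsub]
    simp
  rw [← main_ae, prob_compl_eq_one_sub (chain_meas n ω), ENNReal.toReal_sub_of_le prob_le_one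
    ENNReal.one_ne_top, ← h2]
  simp

lemma EV (n : ℕ) : ∫ ω, 2 * (volume (Tchain n ω)).toReal ∂ P n
        = 1 - 1 / (3 * ((n : ℝ) + 1)) - 2 * H (n + 1) / (3 * ((n : ℝ) + 1)) := by
  have hmeas : Measurable fun ω => μT (Prod.mk ω ⁻¹' EE n) :=
    measurable_measure_prodMk_left (EE_meas n)
  have hIntg : Integrable (fun ω => (μT (Prod.mk ω ⁻¹' EE n)).toReal) (P n) := by
    refine Integrable.of_bound hmeas.ennreal_toReal.aestronglyMeasurable 1
      (Filter.Eventually.of_forall fun ω => ?_)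
    rw [Real.norm_of_nonneg ENNReal.toReal_nonneg]
    exact ENNReal.toReal_le_of_le_ofReal zero_le_one (by simpa using prob_le_one)
  rw [integral_congr_ae ((P_ae n).mono fun ω h => vol_chain h),
    integral_sub (integrable_const _) hIntg,
    integral_toReal hmeas.aemeasurable (Filter.Eventually.of_forall fun ω => measure_lt_top _ _),
    ← Measure.prod_apply (EE_meas n), Measure.prod_apply_symm (EE_meas n), total,
    ENNReal.toReal_ofReal]
  · simp; ring
  · have := H_ge n
    positivity

/-- `E[vol(T_n)] = 1/2 - 1/(6(n+1)) - H_{n+1}/(3(n+1))`; equivalently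
`E[V_n] = 1 - 1/(3(n+1)) - 2 H_{n+1}/(3(n+1))`. -/
theorem stmt13 (n : ℕ) :
    (∫ ω, (volume (Tchain n ω)).toReal ∂ P n
        = 1 / 2 - 1 / (6 * ((n : ℝ) + 1)) - H (n + 1) / (3 * ((n : ℝ) + 1))) ∧
    (∫ ω, V n ω ∂ P n
        = 1 - 1 / (3 * ((n : ℝ) + 1)) - 2 * H (n + 1) / (3 * ((n : ℝ) + 1))) := by
  refine ⟨?_, EV n⟩
  have h := EV n
  rw [integral_const_mul] at h
  have : ∫ ω, (volume (Tchain n ω)).toReal ∂ P n =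
      (1 - 1 / (3 * ((n : ℝ) + 1)) - 2 * H (n + 1) / (3 * ((n : ℝ) + 1))) / 2 := by linarith
  rw [this]
  field_simp
  ring

end
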